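/- Let P(·,n) be the monic MVOPs of the Hermite-type weight W(x) = e^{−x²}L(x)L(x)*. Then for every n ≥ 0 and every x ∈ ℝ, −½ P''(x,n) + P'(x,n)(xI − A) + P(x,n) J = (nI + J) P(x,n), where J = diag(1,2,…,N); i.e. the MVOPs are eigenfunctions of the right-acting second order differential operator D = −½∂_x² + ∂_x(xI−A) + J with eigenvalue Γ(n) = nI + J. -/

import Mathlib

open MeasureTheory Matrix Finset
open scoped ComplexOrder

/-- The physicists' Hermite polynomials, as functions on `ℝ`:
`H_0 = 1`, `H_1(x) = 2x`, `H_{m+1}(x) = 2x H_m(x) − 2m H_{m−1}(x)`. -/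
noncomputable def hermiteF : ℕ → ℝ → ℝ
  | 0, _ => 1
  | 1, x => 2 * x
  | (m + 2), x => 2 * x * hermiteF (m + 1) x - 2 * (m + 1) * hermiteF m x

/-- Entrywise integral of a matrix-valued function on `ℝ`. -/
noncomputable def matInt (N : ℕ) (F : ℝ → Matrix (Fin N) (Fin N) ℂ) :
    Matrix (Fin N) (Fin N) ℂ :=
  Matrix.of fun i j => ∫ y : ℝ, F y i j

/-- Entrywise derivative of a matrix-valued function on `ℝ`. -/
noncomputable def matDeriv (N : ℕ) (F : ℝ → Matrix (Fin N) (Fin N) ℂ) (x : ℝ) :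
    Matrix (Fin N) (Fin N) ℂ :=
  Matrix.of fun i j => deriv (fun y => F y i j) x

/-- `F` is a matrix polynomial of degree `n` with leading coefficient the identity. -/
def IsMonicMatPoly (N n : ℕ) (F : ℝ → Matrix (Fin N) (Fin N) ℂ) : Prop :=
  ∃ c : ℕ → Matrix (Fin N) (Fin N) ℂ, c n = 1 ∧
    ∀ x : ℝ, F x = ∑ k ∈ Finset.range (n + 1), ((x : ℂ) ^ k) • c k

/-- The matrix-valued inner product `⟨H, G⟩ = ∫ H(y) W(y) G(y)* dy`. -/
noncomputable def matIP (N : ℕ) (W H G : ℝ → Matrix (Fin N) (Fin N) ℂ) :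
    Matrix (Fin N) (Fin N) ℂ :=
  matInt N fun y => H y * W y * (G y)ᴴ

/-- The lower triangular matrix `L(x)` with entries
`L(x)_{jk} = (H_{j−k}(x)/(j−k)!)·(α_j/α_k)` for `j ≥ k` (here `0`-based indices). -/
noncomputable def Lmat (N : ℕ) (α : Fin N → ℝ) (x : ℝ) : Matrix (Fin N) (Fin N) ℂ :=
  Matrix.of fun j k =>
    if (k : ℕ) ≤ (j : ℕ) then
      ((hermiteF ((j : ℕ) - (k : ℕ)) x / Nat.factorial ((j : ℕ) - (k : ℕ)) *
          (α j / α k) : ℝ) : ℂ)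
    else 0

/-- The Hermite-type matrix weight `W(x) = e^{−x²} L(x)L(x)*`. -/
noncomputable def hermW (N : ℕ) (α : Fin N → ℝ) (x : ℝ) : Matrix (Fin N) (Fin N) ℂ :=
  Real.exp (-x ^ 2) • (Lmat N α x * (Lmat N α x)ᴴ)

/-- The nilpotent shift matrix `A` with `A_{j,j−1} = 2α_j/α_{j−1}` (1-based), i.e.
(0-based) `A j k = 2 α_j / α_k` when `j = k + 1`. -/
noncomputable def Amat (N : ℕ) (α : Fin N → ℝ) : Matrix (Fin N) (Fin N) ℂ :=
  Matrix.of fun j k => if (j : ℕ) = (k : ℕ) + 1 then ((2 * α j / α k : ℝ) : ℂ) else 0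

/-- The diagonal matrix `J = diag(1, 2, …, N)`. -/
def Jmat (N : ℕ) : Matrix (Fin N) (Fin N) ℂ :=
  Matrix.diagonal fun j => ((j : ℕ) + 1 : ℂ)

/-!
With `W = e^{-x²} L Lᴴ`, the pairing `⟨F, G⟩ = ∫ F W Gᴴ` is the Gaussian pairing of `F L` and `G L`.
Since `L = exp (x A - A² / 4)` with `A` nilpotent, one has `L' = A L`, and `[J, A] = A`
gives `x L' - ½ L'' = J L - L J`. Hence `(F D) L = T (F L) + (F L) J`, where `T = x ∂ - ½ ∂²` acts
entrywise and is symmetric for the Gaussian, so `D` is symmetric for `W`. An operator that does not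
raise degrees and is symmetric for a definite pairing has the monic orthogonal polynomials as
eigenfunctions, and the eigenvalue `n + J` is read off the leading coefficient.
-/

open Polynomial

section OrthogonalPolynomials

variable {R : Type*} [Ring R]

theorem map_eq_zero_of_degree_lt {M : Type*} [AddCommGroup M] [Module R M]
    (P : Polynomial.Sequence R) (hP : ∀ n, (P n).Monic) (f : R[X] →ₗ[R] M) {n : ℕ}
    (hf : ∀ m < n, f (P m) = 0) {F : R[X]} (hF : F.degree < n) : f F = 0 := by
  have hspan := P.span_degreeLT (m := n) fun i _ => by simp [(hP i).leadingCoeff]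
  have hle : Submodule.span R (P '' Set.Iio n) ≤ LinearMap.ker f :=
    Submodule.span_le.2 <| Set.image_subset_iff.2 hf
  exact hle (hspan ▸ mem_degreeLT.2 hF)

theorem symmetric_apply_eq_coeff_smul [StarRing R] (B : R[X] → R[X] →ₗ[R] R)
    (hstar : ∀ F G, star (B F G) = B G F) (hdef : ∀ F, B F F = 0 → F = 0)
    (D : R[X] → R[X]) (hDsymm : ∀ F G, B F (D G) = B (D F) G)
    (hDdeg : ∀ F, (D F).degree ≤ F.degree) {n : ℕ} {p : R[X]} (hmonic : p.Monic)
    (hdeg : p.degree = n) (horth : ∀ F : R[X], F.degree < n → B p F = 0) :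
    D p = (D p).coeff n • p := by
  set γ := (D p).coeff n
  set E := D p - γ • p
  have horth' (F : R[X]) (hF : F.degree < n) : B F p = 0 := by
    rw [← hstar, horth F hF, star_zero]
  have hEle : E.degree ≤ n :=
    (degree_sub_le _ _).trans <| max_le (hdeg ▸ hDdeg p) (hdeg ▸ degree_smul_le γ p)
  have hEn : E.coeff n = 0 := by
    have hpn : p.coeff n = 1 := by
      rw [← natDegree_eq_of_degree_eq_some hdeg, hmonic.coeff_natDegree]
    rw [coeff_sub, coeff_smul, hpn, smul_eq_mul, mul_one, sub_self]
  have hE : E.degree < n := hEle.lt_of_ne fun h => coeff_ne_zero_of_eq_degree h hEn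
  have hEE : B E E = 0 := calc
    B E E = B (D E) p - γ * B E p := by simp only [E, map_sub, map_smul, hDsymm, smul_eq_mul]
    _ = 0 := by rw [horth' E hE, horth' (D E) ((hDdeg E).trans_lt hE), mul_zero, sub_zero]
  exact sub_eq_zero.1 (hdef E hEE)

end OrthogonalPolynomials

section StarRing

variable {R : Type*} [Semiring R]

theorem coeff_unop_opRingEquiv_symm (p : Rᵐᵒᵖ[X]) (k : ℕ) :
    ((opRingEquiv R).symm p).unop.coeff k = (p.coeff k).unop := by
  simpa using (congrArg MulOpposite.unop (coeff_opRingEquiv ((opRingEquiv R).symm p) k)).symm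

variable [StarRing R]

/-- The coefficientwise involution on `R[X]`, for which the variable `X` is self-adjoint. -/
noncomputable instance polynomialStarRing : StarRing R[X] where
  star p := ((opRingEquiv R).symm (mapEquiv starRingEquiv p)).unop
  star_involutive p := by ext k; simp [coeff_unop_opRingEquiv_symm]
  star_mul p q := by simp only [map_mul, MulOpposite.unop_mul]
  star_add p q := by simp only [map_add, MulOpposite.unop_add]

theorem coeff_star (p : R[X]) (k : ℕ) : (star p).coeff k = star (p.coeff k) := by
  change ((opRingEquiv R).symm (mapEquiv starRingEquiv p)).unop.coeff k = _
  simp [coeff_unop_opRingEquiv_symm]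

theorem star_X : star (X : R[X]) = X := by
  ext k; simp [coeff_star, coeff_X, apply_ite star]

theorem star_C (a : R) : star (C a) = C (star a) := by
  ext k; simp [coeff_star, coeff_C, apply_ite star]

theorem star_monomial (k : ℕ) (a : R) : star (monomial k a) = monomial k (star a) := by
  ext l; simp [coeff_star, coeff_monomial, apply_ite star]

theorem star_derivative (p : R[X]) : star (derivative p) = derivative (star p) := by
  ext k
  simp only [coeff_star, coeff_derivative, star_mul, star_add, star_natCast, star_one]
  exact_mod_cast ((k + 1).cast_commute (star (p.coeff (k + 1)))).eq

end StarRing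

section Moments

/-- The moments of the Gaussian weight `e^{-x²}`. -/
noncomputable def gaussMoment (k : ℕ) : ℝ := ∫ x : ℝ, Real.exp (-x ^ 2) * x ^ k

theorem integrable_exp_neg_sq_mul_pow (k : ℕ) :
    Integrable fun x : ℝ => Real.exp (-x ^ 2) * x ^ k := by
  simpa [mul_comm] using integrable_rpow_mul_exp_neg_mul_sq one_pos
    (show (-1 : ℝ) < k from neg_one_lt_zero.trans_le k.cast_nonneg)

theorem hasDerivAt_exp_neg_sq (x : ℝ) :
    HasDerivAt (fun x : ℝ => Real.exp (-x ^ 2)) (Real.exp (-x ^ 2) * -(2 * x)) x := by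
  simpa using (hasDerivAt_pow 2 x).neg.exp

theorem two_mul_gaussMoment_succ (k : ℕ) :
    2 * gaussMoment (k + 1) = k * gaussMoment (k - 1) := by
  have hderiv (x : ℝ) : HasDerivAt (fun x : ℝ => Real.exp (-x ^ 2) * x ^ k)
      (k * (Real.exp (-x ^ 2) * x ^ (k - 1)) - 2 * (Real.exp (-x ^ 2) * x ^ (k + 1))) x :=
    ((hasDerivAt_exp_neg_sq x).mul (hasDerivAt_pow k x)).congr_deriv (by ring)
  have hlow := (integrable_exp_neg_sq_mul_pow (k - 1)).const_mul (k : ℝ)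
  have hhigh := (integrable_exp_neg_sq_mul_pow (k + 1)).const_mul 2
  have h := integral_eq_zero_of_hasDerivAt_of_integrable hderiv (hlow.sub hhigh)
    (integrable_exp_neg_sq_mul_pow k)
  rw [integral_sub hlow hhigh, integral_const_mul, integral_const_mul] at h
  exact (sub_eq_zero.1 h).symm

end Moments

section GaussInt

variable {R : Type*} [Ring R] [Algebra ℝ R]

/-- The integral `∫ e^{-x²} p(x) dx` of a polynomial with coefficients in a real algebra, defined
through the moments so that no topology on the coefficients is needed. -/
noncomputable def gaussInt : R[X] →ₗ[R] R :=
  lsum fun k => gaussMoment k • LinearMap.id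

theorem gaussInt_monomial (k : ℕ) (a : R) : gaussInt (monomial k a) = gaussMoment k • a := by
  simp [gaussInt]

theorem gaussInt_derivative (p : R[X]) :
    gaussInt (derivative p) = (2 : ℝ) • gaussInt (X * p) := by
  induction p using Polynomial.induction_on' with
  | add p q hp hq => simp only [mul_add, map_add, smul_add, hp, hq]
  | monomial k a =>
    rw [derivative_monomial, X_mul_monomial, gaussInt_monomial, gaussInt_monomial, smul_smul,
      two_mul_gaussMoment_succ, mul_smul, Nat.cast_smul_eq_nsmul, ← nsmul_eq_mul', smul_comm]

theorem star_gaussInt [StarRing R] [StarModule ℝ R] (p : R[X]) :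
    star (gaussInt p) = gaussInt (star p) := by
  induction p using Polynomial.induction_on' with
  | add p q hp hq => simp only [map_add, star_add, hp, hq]
  | monomial k a => simp [star_monomial, gaussInt_monomial]

/-- The scalar Hermite differential operator `x ∂ - ½ ∂²`. -/
noncomputable def hermiteDiff (p : R[X]) : R[X] :=
  X * derivative p - (1 / 2 : ℝ) • derivative (derivative p)

theorem gaussInt_hermiteDiff_mul (p q : R[X]) :
    gaussInt (hermiteDiff p * q) = gaussInt (p * hermiteDiff q) := by
  set u := derivative p * q - p * derivative q
  have hu : hermiteDiff p * q - p * hermiteDiff q = X * u - (1 / 2 : ℝ) • derivative u := by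
    simp only [u, hermiteDiff, derivative_sub, derivative_mul, sub_mul, mul_sub, smul_mul_assoc,
      mul_smul_comm, mul_assoc, (commute_X p).symm.left_comm]
    module
  rw [← sub_eq_zero, ← map_sub, hu, map_sub, LinearMap.map_smul_of_tower, gaussInt_derivative]
  module

end GaussInt

section HermiteAppell

/-- The Hermite polynomials in the normalization `H_m / (2^m m!)`, which makes them an Appell
sequence: each is the derivative of the next. -/
noncomputable def hermiteAppell : ℕ → ℝ[X]
  | 0 => 1
  | m + 1 => ((m : ℝ) + 1)⁻¹ •
      (X * hermiteAppell m - (1 / 2 : ℝ) • derivative (hermiteAppell m))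

theorem succ_smul_hermiteAppell_succ (m : ℕ) :
    ((m : ℝ) + 1) • hermiteAppell (m + 1) =
      X * hermiteAppell m - (1 / 2 : ℝ) • derivative (hermiteAppell m) := by
  rw [hermiteAppell, smul_inv_smul₀ (by positivity)]

theorem derivative_hermiteAppell_succ (m : ℕ) :
    derivative (hermiteAppell (m + 1)) = hermiteAppell m := by
  induction m with
  | zero => simp [hermiteAppell]
  | succ m ih =>
    have h := congrArg derivative (succ_smul_hermiteAppell_succ (m + 1))
    have h' := succ_smul_hermiteAppell_succ m
    rw [ih] at h
    refine smul_right_injective _ (show ((m + 1 : ℕ) : ℝ) + 1 ≠ 0 by positivity) ?_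
    simp only [derivative_smul, derivative_sub, derivative_mul, derivative_X, one_mul, ih] at h ⊢
    rw [h, add_sub_assoc, ← h']
    push_cast
    module

theorem eval_hermiteAppell (m : ℕ) (x : ℝ) :
    (hermiteAppell m).eval x = hermiteF m x / (2 ^ m * m.factorial) := by
  induction m using Nat.twoStepInduction with
  | zero => simp [hermiteAppell, hermiteF]
  | one => simp [hermiteAppell, hermiteF]
  | more m ih ih' =>
    rw [hermiteAppell, derivative_hermiteAppell_succ]
    simp only [eval_smul, eval_sub, eval_mul, eval_X, ih, ih', hermiteF, smul_eq_mul]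
    push_cast [Nat.factorial_succ]
    field_simp
    ring

end HermiteAppell

section SecondOrderOperator

variable {R : Type*} [Ring R]

theorem mul_pow_sub_pow_mul {A J : R} (hJA : J * A - A * J = A) (m : ℕ) :
    J * A ^ m - A ^ m * J = m • A ^ m := by
  induction m with
  | zero => simp
  | succ m ih =>
    calc J * A ^ (m + 1) - A ^ (m + 1) * J
        = (J * A ^ m - A ^ m * J) * A + A ^ m * (J * A - A * J) := by
          rw [pow_succ]; noncomm_ring
      _ = (m + 1) • A ^ (m + 1) := by rw [ih, hJA, smul_mul_assoc, ← pow_succ, succ_nsmul]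

variable [Algebra ℝ R]

theorem commute_map_algebraMap (g : ℝ[X]) (p : R[X]) : Commute (g.map (algebraMap ℝ R)) p :=
  letI := Polynomial.algebra ℝ R
  Algebra.commutes g p

theorem hermiteDiff_mul (p q : R[X]) :
    hermiteDiff (p * q) =
      hermiteDiff p * q + p * hermiteDiff q - derivative p * derivative q := by
  simp only [hermiteDiff, derivative_mul, derivative_add, sub_mul, mul_sub, smul_mul_assoc,
    mul_smul_comm, mul_add, mul_assoc, (commute_X p).symm.left_comm]
  module

theorem hermiteDiff_C_mul_map (a : R) (g : ℝ[X]) :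
    hermiteDiff (C a * g.map (algebraMap ℝ R)) = C a * (hermiteDiff g).map (algebraMap ℝ R) := by
  ext k
  simp [hermiteDiff, derivative_map, mul_sub, (commute_X (C a)).left_comm, Algebra.smul_def,
    Algebra.left_comm]

theorem hermiteDiff_hermiteAppell (m : ℕ) :
    hermiteDiff (hermiteAppell m) = m • hermiteAppell m := by
  cases m with
  | zero => simp [hermiteDiff, hermiteAppell]
  | succ m =>
    rw [hermiteDiff, derivative_hermiteAppell_succ, ← succ_smul_hermiteAppell_succ]
    module

/-- The series `exp (x A - A² / 4) = ∑ H_m(x) (A / 2)^m / m!` truncated at order `N`, where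
`A ^ N = 0`. It is the factor `L` of the weight. -/
noncomputable def hermiteExp (N : ℕ) (A : R) : R[X] :=
  ∑ m ∈ range N, C (A ^ m) * (hermiteAppell m).map (algebraMap ℝ R)

theorem derivative_hermiteExp {N : ℕ} {A : R} (hA : A ^ N = 0) :
    derivative (hermiteExp N A) = C A * hermiteExp N A := by
  cases N with
  | zero => simp [hermiteExp]
  | succ n =>
    have hshift (m : ℕ) : derivative (C (A ^ (m + 1)) *
          (hermiteAppell (m + 1)).map (algebraMap ℝ R)) =
        C A * (C (A ^ m) * (hermiteAppell m).map (algebraMap ℝ R)) := by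
      rw [derivative_C_mul, derivative_map, derivative_hermiteAppell_succ, pow_succ', C_mul,
        mul_assoc]
    have htop : C A * (C (A ^ n) * (hermiteAppell n).map (algebraMap ℝ R)) = 0 := by
      rw [← mul_assoc, ← C_mul, ← pow_succ', hA, C_0, zero_mul]
    rw [hermiteExp, derivative_sum, sum_range_succ', mul_sum, sum_range_succ, htop]
    simp only [hshift]
    simp [hermiteAppell]

theorem isUnit_hermiteExp {N : ℕ} {A : R} (hA : A ^ N = 0) : IsUnit (hermiteExp N A) := by
  cases N with
  | zero =>
    have : Subsingleton R := subsingleton_of_zero_eq_one (by simpa using hA.symm)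
    exact isUnit_of_subsingleton _
  | succ n =>
    set tail := ∑ m ∈ range n, C (A ^ m) * (hermiteAppell (m + 1)).map (algebraMap ℝ R)
    have hsplit : hermiteExp (n + 1) A = C A * tail + 1 := by
      simp [hermiteExp, sum_range_succ', tail, mul_sum, pow_succ', mul_assoc, hermiteAppell]
    have hcomm : Commute (C A) tail := Commute.sum_right _ _ _ fun m _ =>
      .mul_right ((Commute.self_pow A m).map C) (commute_map_algebraMap _ _).symm
    have hnil : IsNilpotent (C A) := ⟨n + 1, by rw [← C_pow, hA, C_0]⟩
    exact hsplit ▸ (hcomm.isNilpotent_mul_right hnil).isUnit_add_one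

theorem hermiteDiff_hermiteExp {A J : R} (hJA : J * A - A * J = A) (N : ℕ) :
    hermiteDiff (hermiteExp N A) = C J * hermiteExp N A - hermiteExp N A * C J := by
  have hsum : hermiteDiff (hermiteExp N A) =
      ∑ m ∈ range N, hermiteDiff (C (A ^ m) * (hermiteAppell m).map (algebraMap ℝ R)) := by
    simp only [hermiteDiff, hermiteExp, derivative_sum, mul_sum, smul_sum, sum_sub_distrib]
  rw [hsum, hermiteExp, mul_sum, sum_mul, ← sum_sub_distrib]
  refine sum_congr rfl fun m _ => ?_
  rw [hermiteDiff_C_mul_map, hermiteDiff_hermiteAppell, mul_assoc,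
    (commute_map_algebraMap _ (C J)).eq, ← mul_assoc, ← mul_assoc, ← sub_mul, ← C_mul, ← C_mul,
    ← C_sub, mul_pow_sub_pow_mul hJA]
  simp [mul_assoc, (m.cast_commute (C A ^ m)).left_comm]

/-- The second order operator `-½ ∂² + ∂ (x - A) + J`, whose coefficients act from the right. -/
noncomputable def secondOrderOp (A J : R) (p : R[X]) : R[X] :=
  hermiteDiff p - derivative p * C A + p * C J

theorem secondOrderOp_mul_hermiteExp {N : ℕ} {A J : R} (hA : A ^ N = 0)
    (hJA : J * A - A * J = A) (p : R[X]) :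
    secondOrderOp A J p * hermiteExp N A =
      hermiteDiff (p * hermiteExp N A) + p * hermiteExp N A * C J := by
  rw [hermiteDiff_mul, hermiteDiff_hermiteExp hJA, derivative_hermiteExp hA, secondOrderOp]
  noncomm_ring

theorem coeff_secondOrderOp (A J : R) (p : R[X]) (k : ℕ) :
    (secondOrderOp A J p).coeff k =
      k • p.coeff k - (1 / 2 : ℝ) • (k + 1) • (k + 2) • p.coeff (k + 2)
        - (k + 1) • p.coeff (k + 1) * A + p.coeff k * J := by
  have hderiv (q : R[X]) (l : ℕ) : (derivative q).coeff l = (l + 1) • q.coeff (l + 1) := by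
    rw [coeff_derivative, nsmul_eq_mul', Nat.cast_succ]
  have hX : (X * derivative p).coeff k = k • p.coeff k := by
    cases k <;> simp only [coeff_X_mul_zero, coeff_X_mul, hderiv, zero_smul]
  simp only [secondOrderOp, hermiteDiff, coeff_add, coeff_sub, coeff_smul, hX, coeff_mul_C,
    hderiv]

theorem degree_secondOrderOp_le (A J : R) (p : R[X]) :
    (secondOrderOp A J p).degree ≤ p.degree := by
  refine (degree_le_iff_coeff_zero _ _).2 fun k hk => ?_
  have h (i : ℕ) : p.coeff (k + i) = 0 :=
    coeff_eq_zero_of_degree_lt (hk.trans_le (by exact_mod_cast k.le_add_right i))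
  rw [coeff_secondOrderOp, h 1, h 2, show p.coeff k = 0 from h 0]
  simp

end SecondOrderOperator

section GaussForm

variable {R : Type*} [Ring R] [Algebra ℝ R] [StarRing R]

/-- The pairing `⟨F, G⟩ = ∫ e^{-x²} F L (G L)* dx` for the weight `e^{-x²} L L*`, as a left-linear
map of `F` for fixed `G`. -/
noncomputable def gaussForm (ℒ G : R[X]) : R[X] →ₗ[R] R :=
  gaussInt ∘ₗ LinearMap.mulRight R (ℒ * star (G * ℒ))

theorem gaussForm_apply (ℒ F G : R[X]) :
    gaussForm ℒ G F = gaussInt (F * ℒ * star (G * ℒ)) := by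
  rw [gaussForm, LinearMap.comp_apply, LinearMap.mulRight_apply, mul_assoc]

variable [StarModule ℝ R]

theorem star_hermiteDiff (p : R[X]) : star (hermiteDiff p) = hermiteDiff (star p) := by
  have hsmul (c : ℝ) (q : R[X]) : star (c • q) = c • star q := by
    ext k
    simp only [coeff_star, coeff_smul, star_smul, star_trivial]
  rw [hermiteDiff, hermiteDiff, star_sub, star_mul, star_X, hsmul, star_derivative,
    star_derivative, star_derivative, (commute_X _).eq]

theorem star_gaussForm (ℒ F G : R[X]) : star (gaussForm ℒ F G) = gaussForm ℒ G F := by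
  rw [gaussForm_apply, gaussForm_apply, star_gaussInt, star_mul, star_star]

theorem gaussForm_secondOrderOp {N : ℕ} {A J : R} (hA : A ^ N = 0) (hJA : J * A - A * J = A)
    (hJ : IsSelfAdjoint J) (F G : R[X]) :
    gaussForm (hermiteExp N A) F (secondOrderOp A J G) =
      gaussForm (hermiteExp N A) (secondOrderOp A J F) G := by
  simp only [gaussForm_apply, secondOrderOp_mul_hermiteExp hA hJA, star_add, add_mul, mul_add,
    map_add, gaussInt_hermiteDiff_mul, star_hermiteDiff]
  rw [star_mul _ (C J), star_C, hJ.star_eq, mul_assoc _ (C J)]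

theorem secondOrderOp_eq_C_mul {N : ℕ} {A J : R} (hA : A ^ N = 0) (hJA : J * A - A * J = A)
    (hJ : IsSelfAdjoint J) (hdef : ∀ Q : R[X], gaussInt (Q * star Q) = 0 → Q = 0)
    (p : Polynomial.Sequence R) (hmonic : ∀ n, (p n).Monic)
    (horth : ∀ n m, n ≠ m → gaussForm (hermiteExp N A) (p n) (p m) = 0) (n : ℕ) :
    secondOrderOp A J (p n) = C (n + J) * p n := by
  set ℒ := hermiteExp N A
  have hcoeff : (secondOrderOp A J (p n)).coeff n = n + J := by
    have h0 : (p n).coeff n = 1 := by simpa [Monic, leadingCoeff] using hmonic n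
    have h (i : ℕ) : (p n).coeff (n + (i + 1)) = 0 := coeff_eq_zero_of_degree_lt
      (p.degree_eq n ▸ by exact_mod_cast by lia)
    rw [coeff_secondOrderOp, h0, h 0, h 1]
    simp
  have hzero (F : R[X]) (hF : gaussForm ℒ F F = 0) : F = 0 :=
    (isUnit_hermiteExp hA).mul_left_eq_zero.1 (hdef _ (gaussForm_apply ℒ F F ▸ hF))
  rw [← smul_eq_C_mul, ← hcoeff]
  exact symmetric_apply_eq_coeff_smul (gaussForm ℒ) (star_gaussForm ℒ) hzero (secondOrderOp A J)
    (gaussForm_secondOrderOp hA hJA hJ) (degree_secondOrderOp_le A J) (hmonic n) (p.degree_eq n)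
    fun F hF => map_eq_zero_of_degree_lt p hmonic _ (fun m hm => horth n m hm.ne') hF

end GaussForm

section EvalReal

variable {R : Type*} [Ring R] [Algebra ℝ R]

/-- Evaluation at a real point, which is a ring homomorphism because real scalars are central. -/
noncomputable def evalReal (x : ℝ) : R[X] →+* R :=
  eval₂RingHom' (RingHom.id R) (algebraMap ℝ R x) fun a => (Algebra.commutes x a).symm

theorem evalReal_C (x : ℝ) (a : R) : evalReal x (C a) = a :=
  eval₂_C _ _

theorem evalReal_X (x : ℝ) : evalReal x (X : R[X]) = algebraMap ℝ R x :=
  eval₂_X _ _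

theorem evalReal_monomial (x : ℝ) (k : ℕ) (a : R) : evalReal x (monomial k a) = x ^ k • a := by
  rw [← C_mul_X_pow_eq_monomial, map_mul, map_pow, evalReal_C, evalReal_X, ← map_pow,
    ← Algebra.commutes, Algebra.smul_def]

theorem evalReal_map (x : ℝ) (g : ℝ[X]) :
    evalReal x (g.map (algebraMap ℝ R)) = algebraMap ℝ R (g.eval x) := by
  induction g using Polynomial.induction_on' with
  | add p q hp hq => simp only [Polynomial.map_add, eval_add, map_add, hp, hq]
  | monomial k a =>
    rw [map_monomial, evalReal_monomial, eval_monomial, mul_comm, map_mul, Algebra.smul_def]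

theorem evalReal_smul (x c : ℝ) (p : R[X]) : evalReal x (c • p) = c • evalReal x p := by
  induction p using Polynomial.induction_on' with
  | add p q hp hq => simp only [smul_add, map_add, hp, hq]
  | monomial k a => rw [smul_monomial, evalReal_monomial, evalReal_monomial, smul_comm]

theorem star_evalReal [StarRing R] [StarModule ℝ R] (x : ℝ) (p : R[X]) :
    star (evalReal x p) = evalReal x (star p) := by
  induction p using Polynomial.induction_on' with
  | add p q hp hq => simp only [map_add, star_add, hp, hq]
  | monomial k a => simp [star_monomial, evalReal_monomial]

end EvalReal

section MatrixPolynomials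

variable {N : ℕ}

theorem evalReal_apply (x : ℝ) (p : (Matrix (Fin N) (Fin N) ℂ)[X]) (i j : Fin N) :
    evalReal x p i j = (matPolyEquiv.symm p i j).eval (x : ℂ) := by
  induction p using Polynomial.induction_on' with
  | add p q hp hq => simp only [map_add, Matrix.add_apply, eval_add, hp, hq]
  | monomial k a =>
    have : matPolyEquiv.symm (monomial k a) i j = monomial k (a i j) := by
      ext l
      rw [matPolyEquiv_symm_apply_coeff, coeff_monomial, coeff_monomial]
      split_ifs <;> rfl
    simp [this, evalReal_monomial, mul_comm]

theorem hasDerivAt_evalReal_apply (p : (Matrix (Fin N) (Fin N) ℂ)[X]) (i j : Fin N) (x : ℝ) :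
    HasDerivAt (fun y : ℝ => evalReal y p i j) (evalReal x (derivative p) i j) x := by
  have hderiv : matPolyEquiv.symm (derivative p) i j = derivative (matPolyEquiv.symm p i j) := by
    ext k
    simp only [matPolyEquiv_symm_apply_coeff, coeff_derivative, ← Nat.cast_succ, ← nsmul_eq_mul',
      Matrix.smul_apply]
  simp only [evalReal_apply, hderiv]
  exact ((matPolyEquiv.symm p i j).hasDerivAt _).comp_ofReal

theorem matDeriv_evalReal (p : (Matrix (Fin N) (Fin N) ℂ)[X]) :
    matDeriv N (fun x => evalReal x p) = fun x => evalReal x (derivative p) := by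
  ext x i j
  exact (hasDerivAt_evalReal_apply p i j x).deriv

theorem eq_zero_of_evalReal_eq_zero {p : (Matrix (Fin N) (Fin N) ℂ)[X]}
    (hp : ∀ x : ℝ, evalReal x p = 0) : p = 0 := by
  refine matPolyEquiv.symm.injective (Matrix.ext fun i j => ?_)
  rw [map_zero]
  refine eq_zero_of_infinite_isRoot _ ((Set.infinite_range_of_injective
    Complex.ofReal_injective).mono ?_)
  rintro _ ⟨x, rfl⟩
  simpa [evalReal_apply] using congr_fun₂ (hp x) i j

theorem integrable_exp_neg_sq_mul_evalReal_apply (p : (Matrix (Fin N) (Fin N) ℂ)[X])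
    (i j : Fin N) : Integrable fun x : ℝ => Real.exp (-x ^ 2) * evalReal x p i j := by
  induction p using Polynomial.induction_on' with
  | add p q hp hq =>
    simp only [map_add, Matrix.add_apply, mul_add]
    exact hp.add hq
  | monomial k a =>
    simpa [evalReal_monomial, mul_assoc] using
      (integrable_exp_neg_sq_mul_pow k).ofReal (𝕜 := ℂ).mul_const (a i j)

theorem matInt_exp_neg_sq_smul_evalReal (p : (Matrix (Fin N) (Fin N) ℂ)[X]) :
    matInt N (fun x => Real.exp (-x ^ 2) • evalReal x p) = gaussInt p := by
  ext i j
  change ∫ x : ℝ, Real.exp (-x ^ 2) • evalReal x p i j = gaussInt p i j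
  simp only [Complex.real_smul]
  induction p using Polynomial.induction_on' with
  | add p q hp hq =>
    simp only [map_add, Matrix.add_apply, mul_add, ← hp, ← hq]
    exact integral_add (integrable_exp_neg_sq_mul_evalReal_apply p i j)
      (integrable_exp_neg_sq_mul_evalReal_apply q i j)
  | monomial k a =>
    rw [gaussInt_monomial, Matrix.smul_apply, Complex.real_smul, gaussMoment,
      ← integral_complex_ofReal, ← integral_mul_const]
    simp [evalReal_monomial, mul_assoc]

theorem evalReal_mul_star_apply_self (Q : (Matrix (Fin N) (Fin N) ℂ)[X]) (i : Fin N) (x : ℝ) :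
    evalReal x (Q * star Q) i i = ((∑ j, ‖evalReal x Q i j‖ ^ 2 : ℝ) : ℂ) := by
  rw [map_mul, ← star_evalReal, Matrix.mul_apply]
  push_cast
  exact sum_congr rfl fun j _ => Complex.mul_conj' _

theorem eq_zero_of_gaussInt_mul_star_eq_zero {Q : (Matrix (Fin N) (Fin N) ℂ)[X]}
    (hQ : gaussInt (Q * star Q) = 0) : Q = 0 := by
  refine eq_zero_of_evalReal_eq_zero fun x => Matrix.ext fun i j => ?_
  set f : ℝ → ℝ := fun x => Real.exp (-x ^ 2) * ∑ k, ‖evalReal x Q i k‖ ^ 2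
  have hf (x : ℝ) : (Real.exp (-x ^ 2) : ℂ) * evalReal x (Q * star Q) i i = f x := by
    rw [evalReal_mul_star_apply_self, ← Complex.ofReal_mul]
  have hcont : Continuous f := by
    have hQcont (k : Fin N) : Continuous fun x => evalReal x Q i k :=
      continuous_iff_continuousAt.2 fun x => (hasDerivAt_evalReal_apply Q i k x).continuousAt
    fun_prop
  have hnonneg : 0 ≤ f := fun x => by positivity
  have hintegrable : Integrable f := by
    have h := integrable_exp_neg_sq_mul_evalReal_apply (Q * star Q) i i
    simp only [hf] at h
    exact h.re
  have hintegral : ∫ x, f x = 0 := by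
    have h : ∫ x : ℝ, (Real.exp (-x ^ 2) : ℂ) * evalReal x (Q * star Q) i i = 0 :=
      congr_fun₂ ((matInt_exp_neg_sq_smul_evalReal (Q * star Q)).trans hQ) i i
    simp only [hf, integral_complex_ofReal] at h
    exact_mod_cast h
  have hzero : f = 0 := (hcont.ae_eq_iff_eq _ continuous_const).1
    ((integral_eq_zero_iff_of_nonneg hnonneg hintegrable).1 hintegral)
  have hsum : ∑ k, ‖evalReal x Q i k‖ ^ 2 = 0 :=
    (mul_eq_zero.1 (congrFun hzero x)).resolve_left (Real.exp_ne_zero _)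
  simpa using (sum_eq_zero_iff_of_nonneg fun _ _ => by positivity).1 hsum j (mem_univ j)

theorem evalReal_secondOrderOp (A J : Matrix (Fin N) (Fin N) ℂ)
    (p : (Matrix (Fin N) (Fin N) ℂ)[X]) (x : ℝ) :
    evalReal x (secondOrderOp A J p) =
      -(1 / 2 : ℂ) • matDeriv N (matDeriv N fun y => evalReal y p) x +
        matDeriv N (fun y => evalReal y p) x * ((x : ℂ) • (1 : Matrix (Fin N) (Fin N) ℂ) - A) +
        evalReal x p * J := by
  have hhalf : (1 / 2 : ℂ) = (1 / 2 : ℝ) := by simp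
  simp only [secondOrderOp, hermiteDiff, map_add, map_sub, map_mul, evalReal_C, evalReal_X,
    evalReal_smul, matDeriv_evalReal, hhalf, neg_smul, Complex.coe_smul, mul_sub, mul_smul_comm,
    mul_one, ← Algebra.smul_def]
  abel

theorem IsMonicMatPoly.exists_monic [Nonempty (Fin N)] {n : ℕ} {F : ℝ → Matrix (Fin N) (Fin N) ℂ}
    (hF : IsMonicMatPoly N n F) :
    ∃ p : (Matrix (Fin N) (Fin N) ℂ)[X],
      p.Monic ∧ p.degree = n ∧ F = fun x => evalReal x p := by
  obtain ⟨c, hc, hF⟩ := hF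
  let p := ∑ k ∈ range (n + 1), monomial k (c k)
  have hsplit : p = X ^ n + ∑ k ∈ range n, monomial k (c k) := by
    rw [show p = _ from sum_range_succ _ _, hc, monomial_one_right_eq_X_pow, add_comm]
  have hlow : (∑ k ∈ range n, monomial k (c k)).degree < n := mem_degreeLT.1 <| sum_mem fun k hk =>
    mem_degreeLT.2 ((degree_monomial_le _ _).trans_lt (by exact_mod_cast mem_range.1 hk))
  refine ⟨p, hsplit ▸ monic_X_pow_add hlow, hsplit ▸ ?_, ?_⟩
  · rw [degree_add_eq_left_of_degree_lt (by rwa [degree_X_pow]), degree_X_pow]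
  · funext x
    rw [hF, map_sum]
    refine sum_congr rfl fun k _ => ?_
    rw [evalReal_monomial, ← Complex.ofReal_pow]
    rfl

end MatrixPolynomials

section Weight

variable {N : ℕ} {α : Fin N → ℝ}

theorem Amat_pow_apply (hα : ∀ j, α j ≠ 0) (m : ℕ) (j k : Fin N) :
    (Amat N α ^ m) j k = if (j : ℕ) = k + m then ((2 ^ m * (α j / α k) : ℝ) : ℂ) else 0 := by
  induction m generalizing k with
  | zero =>
    rcases eq_or_ne j k with rfl | hjk
    · simp [hα j]
    · simp [hjk, Fin.val_ne_of_ne hjk]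
  | succ m ih =>
    simp only [pow_succ, Matrix.mul_apply, ih]
    by_cases hk : (k : ℕ) + 1 < N
    · rw [sum_eq_single ⟨k + 1, hk⟩]
      · have : (j : ℕ) = k + 1 + m ↔ (j : ℕ) = k + (m + 1) := by lia
        simp only [Amat, Matrix.of_apply, if_true, this, ite_mul, zero_mul, ← Complex.ofReal_mul]
        congr 2
        have := hα ⟨k + 1, hk⟩
        field_simp
      · intro l _ hl
        have : (l : ℕ) ≠ k + 1 := fun h => hl (Fin.ext h)
        simp [Amat, this]
      · simp
    · rw [if_neg (by lia), sum_eq_zero]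
      intro l _
      have : (l : ℕ) ≠ k + 1 := by lia
      simp [Amat, this]

theorem Amat_pow_eq_zero (hα : ∀ j, α j ≠ 0) : Amat N α ^ N = 0 := by
  ext j k
  rw [Amat_pow_apply hα, if_neg (by lia), Matrix.zero_apply]

theorem Jmat_mul_Amat_sub (N : ℕ) (α : Fin N → ℝ) :
    Jmat N * Amat N α - Amat N α * Jmat N = Amat N α := by
  ext j k
  rw [Jmat, Matrix.sub_apply, diagonal_mul, mul_diagonal, Amat, Matrix.of_apply]
  split_ifs with h
  · rw [h]; push_cast; ring
  · simp

theorem isSelfAdjoint_Jmat (N : ℕ) : IsSelfAdjoint (Jmat N) := by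
  simp [isSelfAdjoint_iff, star_eq_conjTranspose, Jmat, diagonal_conjTranspose]

theorem evalReal_hermiteExp_Amat (hα : ∀ j, α j ≠ 0) (x : ℝ) :
    evalReal x (hermiteExp N (Amat N α)) = Lmat N α x := by
  ext j k
  simp only [hermiteExp, map_sum, map_mul, evalReal_C, evalReal_map, eval_hermiteAppell,
    ← Algebra.commutes, ← Algebra.smul_def, Matrix.sum_apply, Matrix.smul_apply,
    Amat_pow_apply hα, Lmat, Matrix.of_apply]
  split_ifs with hkj
  · rw [sum_eq_single ((j : ℕ) - k)]
    · rw [if_pos (by lia), Complex.real_smul, ← Complex.ofReal_mul]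
      congr 1
      field_simp
    · intro m _ hm
      rw [if_neg (by lia), smul_zero]
    · exact fun h => absurd (mem_range.2 (by lia)) h
  · refine sum_eq_zero fun m _ => ?_
    rw [if_neg (by lia), smul_zero]

theorem matIP_hermW_evalReal (hα : ∀ j, α j ≠ 0) (F G : (Matrix (Fin N) (Fin N) ℂ)[X]) :
    matIP N (hermW N α) (fun x => evalReal x F) (fun x => evalReal x G) =
      gaussForm (hermiteExp N (Amat N α)) G F := by
  rw [gaussForm_apply, ← matInt_exp_neg_sq_smul_evalReal, matIP]
  congr 1
  funext x
  rw [hermW, map_mul, map_mul, ← star_evalReal, map_mul, evalReal_hermiteExp_Amat hα, star_mul]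
  simp only [star_eq_conjTranspose, mul_smul_comm, smul_mul_assoc, mul_assoc]

end Weight

theorem hermite_second_order_operator_general
    (N : ℕ) (α : Fin N → ℝ) (hα : ∀ j, α j ≠ 0)
    (P : ℕ → ℝ → Matrix (Fin N) (Fin N) ℂ)
    (hPmonic : ∀ n, IsMonicMatPoly N n (P n))
    (hPorth : ∀ n m, n ≠ m → matIP N (hermW N α) (P n) (P m) = 0)
    (n : ℕ) (x : ℝ) :
    -(1 / 2 : ℂ) • matDeriv N (matDeriv N (P n)) x +
        matDeriv N (P n) x * ((x : ℂ) • (1 : Matrix (Fin N) (Fin N) ℂ) - Amat N α) +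
        P n x * Jmat N =
      ((n : ℂ) • (1 : Matrix (Fin N) (Fin N) ℂ) + Jmat N) * P n x := by
  rcases isEmpty_or_nonempty (Fin N) with _ | _
  · exact Subsingleton.elim _ _
  choose p hmonic hdegree hPp using fun k => (hPmonic k).exists_monic
  obtain rfl : P = fun k x => evalReal x (p k) := funext hPp
  have horth (k l : ℕ) (hkl : k ≠ l) :
      gaussForm (hermiteExp N (Amat N α)) (p k) (p l) = 0 := by
    rw [← matIP_hermW_evalReal hα]
    exact hPorth l k hkl.symm
  have heigen := secondOrderOp_eq_C_mul (Amat_pow_eq_zero hα) (Jmat_mul_Amat_sub N α)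
    (isSelfAdjoint_Jmat N) (fun _ => eq_zero_of_gaussInt_mul_star_eq_zero) ⟨p, hdegree⟩ hmonic
    horth n
  rw [← evalReal_secondOrderOp]
  simpa [evalReal_C, Nat.cast_smul_eq_nsmul] using congrArg (evalReal x) heigen

/-- **Second order differential operator for Hermite-type MVOPs**
(Proposition 5.6 of the paper): the monic MVOPs for `W(x) = e^{−x²}L(x)L(x)*`
satisfy `−½P'' + P'(xI−A) + P·J = (nI+J)P`. -/
theorem hermite_second_order_operator
    (N : ℕ) (hN : 1 ≤ N) (α : Fin N → ℝ) (hα : ∀ j, 0 < α j)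
    (P : ℕ → ℝ → Matrix (Fin N) (Fin N) ℂ)
    (hPmonic : ∀ n, IsMonicMatPoly N n (P n))
    (hPorth : ∀ n m, n ≠ m → matIP N (hermW N α) (P n) (P m) = 0)
    (hHpos : ∀ n, (matIP N (hermW N α) (P n) (P n)).PosDef)
    :
    ∀ (n : ℕ) (x : ℝ),
      -(1 / 2 : ℂ) • matDeriv N (matDeriv N (P n)) x +
          matDeriv N (P n) x * ((x : ℂ) • (1 : Matrix (Fin N) (Fin N) ℂ) - Amat N α) +
          P n x * Jmat N =
        ((n : ℂ) • (1 : Matrix (Fin N) (Fin N) ℂ) + Jmat N) * P n x := by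
  exact hermite_second_order_operator_general N α (fun j => (hα j).ne') P hPmonic hPorth
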